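/- arXiv:2310.16316 — 5 statements merged into one kernel-verified Lean document; each statement's English description precedes it below -/
import Mathlib

section
/- Let d ≥ 2, let p₁ : ℝ^d → ℝ be the monomial model p₁(x) = ∏_{i=1}^d x_i, and let x = 1_d. For every feature attribution α ∈ ℝ^d, the total deletion error over all nonempty subsets is at least d − 1: Σ_{∅ ≠ S ⊆ {1,…,d}} |1 − Σ_{i∈S} α_i| ≥ d − 1. (In particular, this total already exceeds d − 1 when restricted to the d singleton subsets together with the full subset {1,…,d}.) -/
/-- For the monomial model at `x = 1_d` with `d ≥ 2` (where the deletion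
error on a nonempty `S` equals `|1 − ∑_{i∈S} α_i|`), every feature attribution `α` has
total deletion error over all nonempty subsets at least `d − 1`. -/
theorem monomial_total_deletion_error_ge_d_sub_one
    (d : ℕ) (hd : 2 ≤ d) (α : Fin d → ℝ) :
    ∑ S ∈ (Finset.univ : Finset (Fin d)).powerset.filter (fun S => S.Nonempty),
      |1 - ∑ i ∈ S, α i| ≥ (d : ℝ) - 1 := by
  classical
  have hne : (Finset.univ : Finset (Fin d)).Nonempty := ⟨⟨0, by omega⟩, Finset.mem_univ _⟩
  set T : Finset (Finset (Fin d)) := Finset.univ.image (fun i : Fin d => {i}) with hT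
  have hnot : (Finset.univ : Finset (Fin d)) ∉ T := by
    intro h
    obtain ⟨i, -, hi⟩ := Finset.mem_image.mp h
    have := congrArg Finset.card hi
    simp at this
    omega
  have hsub : insert Finset.univ T ⊆
      (Finset.univ : Finset (Fin d)).powerset.filter (fun S => S.Nonempty) := by
    intro S hS
    rw [Finset.mem_filter]
    refine ⟨by simp, ?_⟩
    rcases Finset.mem_insert.mp hS with h | h
    · rw [h]; exact hne
    · obtain ⟨i, -, rfl⟩ := Finset.mem_image.mp h
      exact Finset.singleton_nonempty i
  have h1 := Finset.sum_le_sum_of_subset_of_nonneg (f := fun S => |1 - ∑ i ∈ S, α i|) hsub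
    (fun _ _ _ => abs_nonneg _)
  rw [Finset.sum_insert hnot, hT,
    Finset.sum_image (fun a _ b _ h => Finset.singleton_injective h)] at h1
  simp only [Finset.sum_singleton] at h1
  have h2 : ∑ i, (1 - α i) ≤ ∑ i, |1 - α i| := Finset.sum_le_sum fun i _ => le_abs_self _
  have h3 : ∑ i, (1 - α i) = (d : ℝ) - ∑ i, α i := by simp [Finset.sum_sub_distrib]
  have h4 := neg_abs_le (1 - ∑ i, α i)
  linarith
end

section
/- Let S₁, S₂, S₃ be nonempty pairwise disjoint subsets of {1,…,d}, let G₁ = S₁ ∪ S₂ and G₂ = S₂ ∪ S₃, and let p₂ : ℝ^d → ℝ be the binomial model p₂(x) = ∏_{i∈G₁} x_i + ∏_{j∈G₂} x_j. At the input x = 1_d, there is no feature attribution α ∈ ℝ^d whose insertion error is zero on every subset S ⊆ {1,…,d}; i.e., for every α ∈ ℝ^d there exists S with |p₂(x_S) − p₂(0_d) − Σ_{i∈S} α_i| > 0. -/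
/-- For the binomial model `p₂ x = ∏_{i∈G₁} x i + ∏_{j∈G₂} x j` with
`G₁ = S₁ ∪ S₂`, `G₂ = S₂ ∪ S₃` for nonempty pairwise disjoint `S₁, S₂, S₃`, at the
input `x = 1_d` no feature attribution has zero insertion error on every subset:
for every `α` there exists `S` with `|p₂(x_S) − p₂(0_d) − ∑_{i∈S} α_i| > 0`. -/
theorem binomial_no_attribution_zero_insertion_error
    (d : ℕ) (S₁ S₂ S₃ : Finset (Fin d))
    (h₁ : S₁.Nonempty) (h₂ : S₂.Nonempty) (h₃ : S₃.Nonempty)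
    (h₁₂ : Disjoint S₁ S₂) (h₁₃ : Disjoint S₁ S₃) (h₂₃ : Disjoint S₂ S₃)
    (α : Fin d → ℝ) :
    ∃ S : Finset (Fin d),
      |((∏ i ∈ S₁ ∪ S₂, (if i ∈ S then (1 : ℝ) else 0)) +
          ∏ j ∈ S₂ ∪ S₃, (if j ∈ S then (1 : ℝ) else 0)) -
        ((∏ _i ∈ S₁ ∪ S₂, (0 : ℝ)) + ∏ _j ∈ S₂ ∪ S₃, (0 : ℝ)) -
        ∑ i ∈ S, α i| > 0 := by
  by_contra hcon
  push Not at hcon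
  obtain ⟨a, ha⟩ := h₁
  obtain ⟨b, hb⟩ := h₂
  obtain ⟨c, hc⟩ := h₃
  have hz : ∀ G S : Finset (Fin d), ∀ i, i ∈ G → i ∉ S →
      (∏ i ∈ G, (if i ∈ S then (1 : ℝ) else 0)) = 0 := by
    intro G S i hi hS
    exact Finset.prod_eq_zero hi (by simp [hS])
  have h0 : ∀ G : Finset (Fin d), ∀ i, i ∈ G → (∏ _i ∈ G, (0 : ℝ)) = 0 := by
    intro G i hi
    exact Finset.prod_eq_zero hi rfl
  have hone : (∏ i ∈ S₁ ∪ S₂, (if i ∈ S₁ ∪ S₂ then (1 : ℝ) else 0)) = 1 :=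
    Finset.prod_eq_one (fun i hi => by simp only [hi, if_true])
  have hb1 : b ∉ S₁ := Finset.disjoint_right.mp h₁₂ hb
  have ha2 : a ∉ S₂ := Finset.disjoint_left.mp h₁₂ ha
  have hc1 : c ∉ S₁ := Finset.disjoint_right.mp h₁₃ hc
  have hc2 : c ∉ S₂ := Finset.disjoint_right.mp h₂₃ hc
  have mb1 : b ∈ S₁ ∪ S₂ := Finset.mem_union_right _ hb
  have mb2 : b ∈ S₂ ∪ S₃ := Finset.mem_union_left _ hb
  have ma : a ∈ S₁ ∪ S₂ := Finset.mem_union_left _ ha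
  have mc : c ∈ S₂ ∪ S₃ := Finset.mem_union_right _ hc
  have nc : c ∉ S₁ ∪ S₂ := by simp [hc1, hc2]
  have e1 := abs_nonpos_iff.mp (hcon S₁)
  have e2 := abs_nonpos_iff.mp (hcon S₂)
  have e3 := abs_nonpos_iff.mp (hcon (S₁ ∪ S₂))
  rw [h0 _ b mb1, h0 _ b mb2, hz _ _ b mb1 hb1, hz _ _ b mb2 hb1] at e1
  rw [h0 _ b mb1, h0 _ b mb2, hz _ _ a ma ha2, hz _ _ c mc hc2] at e2
  rw [h0 _ b mb1, h0 _ b mb2, hone, hz _ _ c mc nc, Finset.sum_union h₁₂] at e3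
  linarith
end

section
/- Let S₁, S₂, S₃ be nonempty pairwise disjoint subsets of {1,…,d}, let G₁ = S₁ ∪ S₂ and G₂ = S₂ ∪ S₃, and let p₂(x) = ∏_{i∈G₁} x_i + ∏_{j∈G₂} x_j. At the input x = 1_d, for every feature attribution α ∈ ℝ^d the sum of the insertion errors on the three subsets S₁, S₂, and G₁ = S₁∪S₂ is at least 1: |Σ_{i∈S₁} α_i| + |Σ_{i∈S₂} α_i| + |1 − Σ_{i∈G₁} α_i| ≥ 1. In particular, some subset S has insertion error at least 1/3. -/
/-- For the binomial model `p₂` with `G₁ = S₁ ∪ S₂`, `G₂ = S₂ ∪ S₃` for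
nonempty pairwise disjoint `S₁, S₂, S₃`, at `x = 1_d` (where the insertion errors on
`S₁`, `S₂`, `G₁` are `|∑_{i∈S₁} α_i|`, `|∑_{i∈S₂} α_i|`, `|1 − ∑_{i∈G₁} α_i|`), every
attribution `α` has these three insertion errors summing to at least 1; in particular
some subset `S` has insertion error at least 1/3. -/
theorem binomial_insertion_error_three_subsets_ge_one
    (d : ℕ) (S₁ S₂ S₃ : Finset (Fin d))
    (h₁ : S₁.Nonempty) (h₂ : S₂.Nonempty) (h₃ : S₃.Nonempty)
    (h₁₂ : Disjoint S₁ S₂) (h₁₃ : Disjoint S₁ S₃) (h₂₃ : Disjoint S₂ S₃)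
    (α : Fin d → ℝ) :
    (|∑ i ∈ S₁, α i| + |∑ i ∈ S₂, α i| + |1 - ∑ i ∈ S₁ ∪ S₂, α i| ≥ 1) ∧
    ∃ S : Finset (Fin d),
      |((∏ i ∈ S₁ ∪ S₂, (if i ∈ S then (1 : ℝ) else 0)) +
          ∏ j ∈ S₂ ∪ S₃, (if j ∈ S then (1 : ℝ) else 0)) -
        ((∏ _i ∈ S₁ ∪ S₂, (0 : ℝ)) + ∏ _j ∈ S₂ ∪ S₃, (0 : ℝ)) -
        ∑ i ∈ S, α i| ≥ 1 / 3 := by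
  have key : |∑ i ∈ S₁, α i| + |∑ i ∈ S₂, α i| + |1 - ∑ i ∈ S₁ ∪ S₂, α i| ≥ 1 := by
    rw [Finset.sum_union h₁₂]
    have a := le_abs_self (∑ i ∈ S₁, α i)
    have b := le_abs_self (∑ i ∈ S₂, α i)
    have c := le_abs_self (1 - (∑ i ∈ S₁, α i + ∑ i ∈ S₂, α i))
    linarith
  refine ⟨key, ?_⟩
  have ind : ∀ G S : Finset (Fin d),
      (∏ i ∈ G, (if i ∈ S then (1 : ℝ) else 0)) = if G ⊆ S then 1 else 0 := by
    intro G S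
    rw [Finset.prod_ite_zero]
    simp [Finset.subset_iff]
  obtain ⟨a, ha⟩ := h₁
  obtain ⟨b, hb⟩ := h₂
  obtain ⟨c, hc⟩ := h₃
  have ha2 : a ∉ S₂ := Finset.disjoint_left.mp h₁₂ ha
  have hb1 : b ∉ S₁ := Finset.disjoint_right.mp h₁₂ hb
  have hc1 : c ∉ S₁ := Finset.disjoint_right.mp h₁₃ hc
  have hc2 : c ∉ S₂ := Finset.disjoint_right.mp h₂₃ hc
  have z1 : (∏ _i ∈ S₁ ∪ S₂, (0 : ℝ)) = 0 :=
    Finset.prod_eq_zero (Finset.mem_union_left _ ha) rfl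
  have z2 : (∏ _i ∈ S₂ ∪ S₃, (0 : ℝ)) = 0 :=
    Finset.prod_eq_zero (Finset.mem_union_left _ hb) rfl
  by_contra! hcon
  have e1 := hcon S₁
  have e2 := hcon S₂
  have e3 := hcon (S₁ ∪ S₂)
  have n1 : ¬ (S₁ ∪ S₂ ⊆ S₁) := fun h => hb1 (h (Finset.mem_union_right _ hb))
  have n2 : ¬ (S₂ ∪ S₃ ⊆ S₁) := fun h => hb1 (h (Finset.mem_union_left _ hb))
  have n3 : ¬ (S₁ ∪ S₂ ⊆ S₂) := fun h => ha2 (h (Finset.mem_union_left _ ha))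
  have n4 : ¬ (S₂ ∪ S₃ ⊆ S₂) := fun h => hc2 (h (Finset.mem_union_right _ hc))
  have n5 : ¬ (S₂ ∪ S₃ ⊆ S₁ ∪ S₂) := fun h =>
    (Finset.mem_union.mp (h (Finset.mem_union_right _ hc))).elim hc1 hc2
  rw [ind, ind, z1, z2, if_neg n1, if_neg n2, add_zero, sub_zero, zero_sub, abs_neg] at e1
  rw [ind, ind, z1, z2, if_neg n3, if_neg n4, add_zero, sub_zero, zero_sub, abs_neg] at e2
  rw [ind, ind, z1, z2, if_pos (Finset.Subset.refl _), if_neg n5, add_zero, add_zero,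
    sub_zero] at e3
  linarith
end

section
/- Let S₁, S₂, S₃ be nonempty pairwise disjoint subsets of {1,…,d}, let G₁ = S₁ ∪ S₂ and G₂ = S₂ ∪ S₃, and let p₂(x) = ∏_{i∈G₁} x_i + ∏_{j∈G₂} x_j. At the input x = 1_d, the grouped attribution β = {(G₁, 1), (G₂, 1)} achieves total grouped insertion error 0 over all subsets S ⊆ {1,…,d}, whereas every feature attribution α ∈ ℝ^d has total insertion error Σ_{S ⊆ {1,…,d}} |p₂(x_S) − p₂(0_d) − Σ_{i∈S} α_i| ≥ 1. Hence grouped attributions achieve strictly lower total insertion error than every feature attribution for p₂. -/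
theorem prod_ind {d : ℕ} (G S : Finset (Fin d)) :
    (∏ i ∈ G, (if i ∈ S then (1 : ℝ) else 0)) = if G ⊆ S then 1 else 0 := by
  rw [Finset.prod_ite_zero]
  simp [Finset.subset_iff]

/-- For the binomial model `p₂` with `G₁ = S₁ ∪ S₂`, `G₂ = S₂ ∪ S₃` for
nonempty pairwise disjoint `S₁, S₂, S₃`, at `x = 1_d` the grouped attribution
`{(G₁,1), (G₂,1)}` achieves total grouped insertion error 0 over all subsets `S`,
whereas every feature attribution `α ∈ ℝ^d` has total insertion error
`∑_{S ⊆ {1,…,d}} |p₂(x_S) − p₂(0_d) − ∑_{i∈S} α_i| ≥ 1`; hence grouped attributions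
achieve strictly lower total insertion error. -/
theorem binomial_grouped_beats_feature_attribution_insertion
    (d : ℕ) (S₁ S₂ S₃ : Finset (Fin d))
    (h₁ : S₁.Nonempty) (h₂ : S₂.Nonempty) (h₃ : S₃.Nonempty)
    (h₁₂ : Disjoint S₁ S₂) (h₁₃ : Disjoint S₁ S₃) (h₂₃ : Disjoint S₂ S₃)
    (groups : Fin 2 → Finset (Fin d)) (scores : Fin 2 → ℝ)
    (hgroups : groups = ![S₁ ∪ S₂, S₂ ∪ S₃]) (hscores : scores = fun _ => 1) :
    (∑ S ∈ (Finset.univ : Finset (Fin d)).powerset,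
        |((∏ i ∈ S₁ ∪ S₂, (if i ∈ S then (1 : ℝ) else 0)) +
            ∏ j ∈ S₂ ∪ S₃, (if j ∈ S then (1 : ℝ) else 0)) -
          ((∏ _i ∈ S₁ ∪ S₂, (0 : ℝ)) + ∏ _j ∈ S₂ ∪ S₃, (0 : ℝ)) -
          ∑ k ∈ Finset.univ.filter (fun k => groups k ⊆ S), scores k| = 0) ∧
    ∀ α : Fin d → ℝ,
      ∑ S ∈ (Finset.univ : Finset (Fin d)).powerset,
        |((∏ i ∈ S₁ ∪ S₂, (if i ∈ S then (1 : ℝ) else 0)) +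
            ∏ j ∈ S₂ ∪ S₃, (if j ∈ S then (1 : ℝ) else 0)) -
          ((∏ _i ∈ S₁ ∪ S₂, (0 : ℝ)) + ∏ _j ∈ S₂ ∪ S₃, (0 : ℝ)) -
          ∑ i ∈ S, α i| ≥ 1 := by
  have z1 : (∏ _i ∈ S₁ ∪ S₂, (0 : ℝ)) = 0 := by
    obtain ⟨a, ha⟩ := h₁
    exact Finset.prod_eq_zero (Finset.mem_union_left _ ha) rfl
  have z2 : (∏ _i ∈ S₂ ∪ S₃, (0 : ℝ)) = 0 := by
    obtain ⟨a, ha⟩ := h₂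
    exact Finset.prod_eq_zero (Finset.mem_union_left _ ha) rfl
  simp only [z1, z2, prod_ind]
  refine ⟨?_, fun α => ?_⟩
  · refine Finset.sum_eq_zero fun S _ => ?_
    subst hgroups hscores
    rw [Finset.sum_filter, Fin.sum_univ_two]
    by_cases p : S₁ ∪ S₂ ⊆ S <;> by_cases q : S₂ ∪ S₃ ⊆ S <;> simp [p, q]
  · obtain ⟨a, ha⟩ := h₁
    obtain ⟨b, hb⟩ := h₂
    obtain ⟨c, hc⟩ := h₃
    have hb1 : b ∉ S₁ := fun h => Finset.disjoint_left.1 h₁₂ h hb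
    have ha2 : a ∉ S₂ := fun h => Finset.disjoint_left.1 h₁₂ ha h
    have hc1 : c ∉ S₁ := fun h => Finset.disjoint_left.1 h₁₃ h hc
    have hc2 : c ∉ S₂ := fun h => Finset.disjoint_left.1 h₂₃ h hc
    have n1 : ¬ (S₁ ∪ S₂ ⊆ S₁) := fun h => hb1 (h (Finset.mem_union_right _ hb))
    have n2 : ¬ (S₂ ∪ S₃ ⊆ S₁) := fun h => hc1 (h (Finset.mem_union_right _ hc))
    have n3 : ¬ (S₁ ∪ S₂ ⊆ S₂) := fun h => ha2 (h (Finset.mem_union_left _ ha))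
    have n4 : ¬ (S₂ ∪ S₃ ⊆ S₂) := fun h => hc2 (h (Finset.mem_union_right _ hc))
    have n5 : ¬ (S₂ ∪ S₃ ⊆ S₁ ∪ S₂) := fun h =>
      (Finset.mem_union.1 (h (Finset.mem_union_right _ hc))).elim hc1 hc2
    have e12 : S₁ ≠ S₂ := fun h => ha2 (h ▸ ha)
    have e1 : S₁ ≠ S₁ ∪ S₂ := fun h => n1 h.symm.subset
    have e2 : S₂ ≠ S₁ ∪ S₂ := fun h => n3 h.symm.subset
    refine ge_iff_le.2 (le_trans ?_ (Finset.sum_le_sum_of_subset_of_nonneg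
      (s := {S₁, S₂, S₁ ∪ S₂}) (fun S _ => by simp) (fun _ _ _ => abs_nonneg _)))
    rw [Finset.sum_insert (by simp only [Finset.mem_insert, Finset.mem_singleton]; tauto),
      Finset.sum_insert (by simpa only [Finset.mem_singleton] using e2), Finset.sum_singleton,
      Finset.sum_union h₁₂]
    rw [if_neg n1, if_neg n2, if_neg n3, if_neg n4, if_neg n5, if_pos (Finset.Subset.refl _)]
    have t1 := neg_le_abs ((0 : ℝ) + 0 - (0 + 0) - ∑ i ∈ S₁, α i)
    have t2 := neg_le_abs ((0 : ℝ) + 0 - (0 + 0) - ∑ i ∈ S₂, α i)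
    have t3 := le_abs_self ((1 : ℝ) + 0 - (0 + 0) - (∑ i ∈ S₁, α i + ∑ i ∈ S₂, α i))
    linarith
end

section
/- Let d ≥ 2, let p₁ : ℝ^d → ℝ be the monomial model p₁(x) = ∏_{i=1}^d x_i, and let x = 1_d. The grouped attribution β = {({1,…,d}, 1)} achieves total grouped deletion error 0 summed over all nonempty subsets S ⊆ {1,…,d}, whereas every feature attribution α ∈ ℝ^d has total deletion error Σ_{∅ ≠ S ⊆ {1,…,d}} |1 − Σ_{i∈S} α_i| ≥ 1. Hence grouped attributions achieve strictly lower total deletion error than every feature attribution for p₁. -/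
/-- For the monomial model `p₁ x = ∏ i, x i` with `d ≥ 2` at `x = 1_d`,
the grouped attribution `{({1,…,d}, 1)}` achieves total grouped deletion error 0 over
all nonempty subsets `S`, whereas every feature attribution `α ∈ ℝ^d` has total
deletion error `∑_{∅ ≠ S ⊆ {1,…,d}} |1 − ∑_{i∈S} α_i| ≥ 1`; hence grouped attributions
achieve strictly lower total deletion error. -/
theorem monomial_grouped_beats_feature_attribution_deletion
    (d : ℕ) (hd : 2 ≤ d)
    (groups : Fin 1 → Finset (Fin d)) (scores : Fin 1 → ℝ)
    (hgroups : groups = fun _ => Finset.univ) (hscores : scores = fun _ => 1) :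
    (∑ S ∈ (Finset.univ : Finset (Fin d)).powerset.filter (fun S => S.Nonempty),
        |(∏ _i : Fin d, (1 : ℝ)) - (∏ i : Fin d, (if i ∈ S then (0 : ℝ) else 1)) -
          ∑ k ∈ Finset.univ.filter (fun k => (S ∩ groups k).Nonempty), scores k| = 0) ∧
    ∀ α : Fin d → ℝ,
      ∑ S ∈ (Finset.univ : Finset (Fin d)).powerset.filter (fun S => S.Nonempty),
        |1 - ∑ i ∈ S, α i| ≥ 1 := by
  subst hgroups hscores
  refine ⟨?_, ?_⟩
  · apply Finset.sum_eq_zero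
    intro S hS
    have hne : S.Nonempty := (Finset.mem_filter.mp hS).2
    have hprod : (∏ i : Fin d, (if i ∈ S then (0 : ℝ) else 1)) = 0 := by
      obtain ⟨j, hj⟩ := hne
      exact Finset.prod_eq_zero (Finset.mem_univ j) (by simp [hj])
    rw [hprod]
    simp [hne]
  · intro α
    let a : Fin d := ⟨0, by omega⟩
    let b : Fin d := ⟨1, by omega⟩
    have hab : a ≠ b := by simp [a, b]
    have hsub : ({{a}, {b}, {a, b}} : Finset (Finset (Fin d))) ⊆
        (Finset.univ : Finset (Fin d)).powerset.filter (fun S => S.Nonempty) := by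
      intro S hS
      simp only [Finset.mem_insert, Finset.mem_singleton] at hS
      rcases hS with rfl | rfl | rfl <;> simp
    have h1 : ({a} : Finset (Fin d)) ∉ ({{b}, {a, b}} : Finset (Finset (Fin d))) := by
      simp only [Finset.mem_insert, Finset.mem_singleton, not_or]
      refine ⟨by simpa using hab, fun h => ?_⟩
      have : b ∈ ({a} : Finset (Fin d)) := by rw [h]; simp
      exact hab (Finset.mem_singleton.mp this).symm
    have h2 : ({b} : Finset (Fin d)) ∉ ({{a, b}} : Finset (Finset (Fin d))) := by
      simp only [Finset.mem_singleton]
      intro h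
      have : a ∈ ({b} : Finset (Fin d)) := by rw [h]; simp
      exact hab (Finset.mem_singleton.mp this)
    have hle := Finset.sum_le_sum_of_subset_of_nonneg (f := fun S => |1 - ∑ i ∈ S, α i|) hsub
      (fun _ _ _ => abs_nonneg _)
    rw [Finset.sum_insert h1, Finset.sum_insert h2, Finset.sum_singleton] at hle
    simp only [Finset.sum_singleton, Finset.sum_pair hab] at hle
    have e1 := le_abs_self (1 - α a)
    have e2 := le_abs_self (1 - α b)
    have e3 := neg_abs_le (1 - (α a + α b))
    have e4 := le_abs_self (1 - (α a + α b))
    have e5 := neg_abs_le (1 - (α a + α b))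
    have e6 := neg_le_abs (1 - (α a + α b))
    linarith
end
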